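/- 804230935331967001 = 891001 · 895051 · 1008451 is a Carmichael number less than 10^18 whose smallest prime factor is 891001, and 891001 is the largest value of the smallest prime factor among Carmichael numbers less than 10^18: every Carmichael number N < 10^18 has some prime factor p with p ≤ 891001. -/

import Mathlib

/-- A Carmichael number: a composite natural number `N` such that
`b ^ (N - 1) ≡ 1 [MOD N]` for every `b` coprime to `N`. -/
def IsCarmichael (N : ℕ) : Prop :=
  1 < N ∧ ¬ N.Prime ∧ ∀ b : ℕ, Nat.Coprime b N → b ^ (N - 1) ≡ 1 [MOD N]

/-!
By Korselt's criterion a Carmichael number `N` is squarefree, has at least three prime factors, and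
satisfies `p - 1 ∣ N / p - 1` for each of them. If `N < 10 ^ 18` and all prime factors exceed
`891001`, there are exactly three, and dividing out `g = gcd (p - 1) (q - 1)`, which also divides
`r - 1`, they are `g * a + 1 < g * b + 1 < g * c + 1` with `a`, `b`, `c` pairwise coprime. The
divisibilities then combine to
`k * (a * b * c) = g * (a * b + b * c + c * a) + (a + b + c)`.
As `a` is the smallest of the three, this forces `g < k * a < 3 * g`, hence
`a ^ 2 < 3 * g * a ≤ 3 * 10 ^ 6`. For given `g` and `a`, the size of `N` bounds `b`, and an
inequality between `k * a - g` and `g ^ 3 * a * b * c` rules out most pairs `(g, a)`. Finally `g`,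
`a`, `b` and `k` determine `c`. The remaining finite search is evaluated in the kernel, with
primality of the three factors relaxed to coprimality to `1200 !`.
-/

open ArithmeticFunction (carmichael)
open scoped Nat

theorem carmichael_dvd_iff_forall_coprime {n m : ℕ} [NeZero n] :
    carmichael n ∣ m ↔ ∀ b : ℕ, b.Coprime n → b ^ m ≡ 1 [MOD n] := by
  rw [ArithmeticFunction.carmichael_eq_exponent', Monoid.exponent_dvd_iff_forall_pow_eq_one]
  refine ⟨fun h b hb ↦ ?_, fun h u ↦ ?_⟩
  · simpa [← ZMod.natCast_eq_natCast_iff, Units.ext_iff] using h (ZMod.unitOfCoprime b hb)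
  · simpa [← ZMod.natCast_eq_natCast_iff, Units.ext_iff] using h _ (ZMod.val_coe_unit_coprime u)

theorem carmichael_prime_pow_of_le_two {p n : ℕ} (hp : p.Prime) (hn : n ≤ 2) :
    carmichael (p ^ n) = φ (p ^ n) := by
  rcases eq_or_ne p 2 with rfl | hp2
  · exact ArithmeticFunction.carmichael_two_pow_of_le_two_eq_totient hn
  · exact ArithmeticFunction.carmichael_pow_of_prime_ne_two n hp hp2

theorem carmichael_prime {p : ℕ} (hp : p.Prime) : carmichael p = p - 1 := by
  simpa [Nat.totient_prime hp] using carmichael_prime_pow_of_le_two hp one_le_two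

theorem isCarmichael_iff_carmichael_dvd {N : ℕ} :
    IsCarmichael N ↔ 1 < N ∧ ¬ N.Prime ∧ carmichael N ∣ N - 1 := by
  refine and_congr_right fun hN ↦ and_congr_right fun _ ↦ ?_
  have : NeZero N := ⟨by lia⟩
  exact carmichael_dvd_iff_forall_coprime.symm

namespace IsCarmichael

variable {N p m : ℕ}

theorem sub_one_dvd_sub_one (h : IsCarmichael N) (hp : p.Prime) (hpN : p ∣ N) :
    p - 1 ∣ N - 1 := by
  rw [← carmichael_prime hp]
  exact (ArithmeticFunction.carmichael_dvd hpN).trans (isCarmichael_iff_carmichael_dvd.1 h).2.2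

theorem squarefree (h : IsCarmichael N) : Squarefree N := by
  rw [Nat.squarefree_iff_prime_squarefree]
  intro p hp hpp
  have hlam : p ∣ carmichael (p ^ 2) := by
    rw [carmichael_prime_pow_of_le_two hp le_rfl, Nat.totient_prime_pow_succ hp, pow_one]
    exact dvd_mul_right p (p - 1)
  have hpN1 : p ∣ N - 1 :=
    hlam.trans <| (ArithmeticFunction.carmichael_dvd (sq p ▸ hpp)).trans
      (isCarmichael_iff_carmichael_dvd.1 h).2.2
  have hpN : p ∣ N := (dvd_mul_right p p).trans hpp
  exact hp.not_dvd_one <| (Nat.dvd_sub_iff_right h.1.le hpN).1 hpN1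

theorem sub_one_dvd_cofactor_sub_one (h : IsCarmichael (p * m)) (hp : p.Prime) :
    p - 1 ∣ m - 1 := by
  have hm : 0 < m := Nat.pos_of_mul_pos_left (zero_lt_one.trans h.1)
  have hsplit : p * m - 1 = (p - 1) * m + (m - 1) := by
    have := Nat.le_mul_of_pos_left m hp.pos
    rw [Nat.sub_one_mul]
    lia
  have hdvd := h.sub_one_dvd_sub_one hp (dvd_mul_right p m)
  rwa [hsplit, Nat.dvd_add_right (dvd_mul_right _ _)] at hdvd

theorem le_cofactor (h : IsCarmichael (p * m)) (hp : p.Prime) : p ≤ m := by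
  have hm0 : m ≠ 0 := by
    rintro rfl
    simpa using h.1
  have hm1 : m ≠ 1 := by
    rintro rfl
    exact h.2.1 (by rwa [mul_one])
  have := Nat.le_of_dvd (by lia) (h.sub_one_dvd_cofactor_sub_one hp)
  lia

theorem two_lt_card_primeFactors (h : IsCarmichael N) : 2 < N.primeFactors.card := by
  have hprod := Nat.prod_primeFactors_of_squarefree h.squarefree
  by_contra! hle
  obtain h0 | h1 | h2 : N.primeFactors.card = 0 ∨ N.primeFactors.card = 1 ∨
      N.primeFactors.card = 2 := by lia
  · have := h.1
    rw [Finset.card_eq_zero] at h0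
    simp only [h0, Finset.prod_empty] at hprod
    lia
  · obtain ⟨p, hp⟩ := Finset.card_eq_one.1 h1
    have hpp : p.Prime := Nat.prime_of_mem_primeFactors (n := N) (by simp [hp])
    rw [hp, Finset.prod_singleton] at hprod
    exact h.2.1 (hprod ▸ hpp)
  · obtain ⟨p, q, hpq, hs⟩ := Finset.card_eq_two.1 h2
    have hpp : p.Prime := Nat.prime_of_mem_primeFactors (n := N) (by simp [hs])
    have hqq : q.Prime := Nat.prime_of_mem_primeFactors (n := N) (by simp [hs])
    rw [hs, Finset.prod_pair hpq] at hprod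
    subst hprod
    exact hpq (le_antisymm (h.le_cofactor hpp) ((mul_comm p q ▸ h).le_cofactor hqq))

theorem card_primeFactors_eq_three {B : ℕ} (h : IsCarmichael N) (hN : N < B ^ 4)
    (hB : ∀ p, p.Prime → p ∣ N → B ≤ p) : N.primeFactors.card = 3 := by
  have hpow : B ^ N.primeFactors.card ≤ N := by
    conv_rhs => rw [← Nat.prod_primeFactors_of_squarefree h.squarefree]
    exact Finset.pow_card_le_prod _ _ _ fun p hp ↦
      hB p (Nat.prime_of_mem_primeFactors hp) (Nat.dvd_of_mem_primeFactors hp)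
  have hB0 : 0 < B := Nat.pos_of_ne_zero fun h0 ↦ by simp [h0] at hN
  refine le_antisymm ?_ h.two_lt_card_primeFactors
  by_contra! h4
  exact ((Nat.pow_le_pow_right hB0 h4).trans hpow).not_gt hN

end IsCarmichael

theorem exists_lt_lt_of_card_primeFactors_eq_three {N : ℕ} (hN : Squarefree N)
    (h3 : N.primeFactors.card = 3) :
    ∃ p q r : ℕ, p.Prime ∧ q.Prime ∧ r.Prime ∧ p < q ∧ q < r ∧ p * q * r = N := by
  let e := N.primeFactors.orderEmbOfFin h3
  have he (i : Fin 3) : (e i).Prime :=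
    Nat.prime_of_mem_primeFactors (N.primeFactors.orderEmbOfFin_mem h3 i)
  refine ⟨e 0, e 1, e 2, he 0, he 1, he 2, e.strictMono (by decide), e.strictMono (by decide), ?_⟩
  rw [← Fin.prod_univ_three e, ← Nat.prod_primeFactors_of_squarefree hN,
    ← Finset.map_orderEmbOfFin_univ N.primeFactors h3, Finset.prod_map]
  rfl

theorem isCarmichael_mul_mul {p q r : ℕ} (hp : p.Prime) (hq : q.Prime) (hr : r.Prime)
    (hpq : p < q) (hqr : q < r) (hpN : p - 1 ∣ p * q * r - 1) (hqN : q - 1 ∣ p * q * r - 1)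
    (hrN : r - 1 ∣ p * q * r - 1) : IsCarmichael (p * q * r) := by
  have hpq' : p.Coprime q := (Nat.coprime_primes hp hq).2 hpq.ne
  have hpr' : p.Coprime r := (Nat.coprime_primes hp hr).2 (hpq.trans hqr).ne
  have hqr' : q.Coprime r := (Nat.coprime_primes hq hr).2 hqr.ne
  have hpq1 : 1 < p * q := Nat.one_lt_mul_iff.2 ⟨hp.pos, hq.pos, .inl hp.one_lt⟩
  refine isCarmichael_iff_carmichael_dvd.2
    ⟨Nat.one_lt_mul_iff.2 ⟨by lia, hr.pos, .inl hpq1⟩, Nat.not_prime_mul hpq1.ne' hr.ne_one, ?_⟩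
  rw [ArithmeticFunction.carmichael_mul (hpr'.mul_left hqr'),
    ArithmeticFunction.carmichael_mul hpq', carmichael_prime hp, carmichael_prime hq,
    carmichael_prime hr]
  exact Nat.lcm_dvd (Nat.lcm_dvd hpN hqN) hrN

theorem minFac_mul_mul {p q r : ℕ} (hp : p.Prime) (hq : q.Prime) (hr : r.Prime)
    (hpq : p ≤ q) (hpr : p ≤ r) : (p * q * r).minFac = p := by
  refine le_antisymm (Nat.minFac_le_of_dvd hp.two_le ⟨q * r, mul_assoc p q r⟩) ?_
  have hs : (p * q * r).minFac.Prime :=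
    Nat.minFac_prime fun h1 ↦ hr.ne_one (mul_eq_one.1 h1).2
  have hdvd := (p * q * r).minFac_dvd
  rw [hs.dvd_mul, hs.dvd_mul, Nat.prime_dvd_prime_iff_eq hs hp, Nat.prime_dvd_prime_iff_eq hs hq,
    Nat.prime_dvd_prime_iff_eq hs hr] at hdvd
  lia

/-- The numbers attached to a Carmichael number with three prime factors
`p = g * a + 1`, `q = g * b + 1` and `r = g * c + 1` in increasing order, where `g` is the greatest
common divisor of `p - 1` and `q - 1`. The three divisibilities `p - 1 ∣ q * r - 1`,
`q - 1 ∣ r * p - 1` and `r - 1 ∣ p * q - 1` combine to the equation `mul_eq`. -/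
structure IsReducedTriple (g a b c k : ℕ) : Prop where
  gcd_pos : 0 < g
  pos : 0 < a
  lt_mid : a < b
  mid_lt : b < c
  coprime : a.Coprime b
  mul_eq : k * (a * b * c) = g * (a * b + b * c + c * a) + (a + b + c)

theorem gcd_dvd_of_dvd_mul_add {x y z : ℕ} (h : x ∣ y * z + y + z) : x.gcd y ∣ z :=
  (Nat.dvd_add_right ((x.gcd_dvd_right y).trans ⟨z + 1, (Nat.mul_succ y z).symm⟩)).1
    ((x.gcd_dvd_left y).trans h)

theorem coprime_of_gcd_mul_dvd {g a b : ℕ} (hg : 0 < g) (h : (g * a).gcd (g * b) ∣ g) :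
    a.Coprime b := by
  rw [Nat.gcd_mul_left] at h
  exact Nat.dvd_one.1 (Nat.dvd_of_mul_dvd_mul_left hg (by rwa [mul_one]))

theorem dvd_of_mul_dvd_mul_add {g a b c : ℕ} (hg : 0 < g)
    (h : g * a ∣ g * b * (g * c) + g * b + g * c) :
    a ∣ g * (a * b + b * c + c * a) + (a + b + c) := by
  have ha : a ∣ g * (b * c) + b + c := by
    refine Nat.dvd_of_mul_dvd_mul_left hg (h.trans (dvd_of_eq ?_))
    ring
  refine (ha.add (dvd_mul_right a (g * (b + c) + 1))).trans (dvd_of_eq ?_)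
  ring

theorem exists_isReducedTriple_of_dvd {x y z : ℕ} (hx : 0 < x) (hxy : x < y) (hyz : y < z)
    (hxd : x ∣ y * z + y + z) (hyd : y ∣ z * x + z + x) (hzd : z ∣ x * y + x + y) :
    ∃ g a b c k, x = g * a ∧ y = g * b ∧ z = g * c ∧ IsReducedTriple g a b c k := by
  have hg : 0 < x.gcd y := Nat.gcd_pos_of_pos_left y hx
  have hgz : x.gcd y ∣ z := gcd_dvd_of_dvd_mul_add hxd
  have hyz_dvd : y.gcd z ∣ x.gcd y :=
    Nat.dvd_gcd (gcd_dvd_of_dvd_mul_add hyd) (y.gcd_dvd_left z)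
  have hzx_dvd : z.gcd x ∣ x.gcd y :=
    Nat.dvd_gcd (z.gcd_dvd_right x) (gcd_dvd_of_dvd_mul_add hzd)
  obtain ⟨a, ha⟩ := x.gcd_dvd_left y
  obtain ⟨b, hb⟩ := x.gcd_dvd_right y
  obtain ⟨c, hc⟩ := hgz
  generalize hgcd : x.gcd y = g at *
  subst ha hb hc
  have hab : a.Coprime b := coprime_of_gcd_mul_dvd hg hgcd.dvd
  have hbc : b.Coprime c := coprime_of_gcd_mul_dvd hg hyz_dvd
  have hca : c.Coprime a := coprime_of_gcd_mul_dvd hg hzx_dvd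
  have ha_dvd := dvd_of_mul_dvd_mul_add hg hxd
  have hb_dvd : b ∣ g * (a * b + b * c + c * a) + (a + b + c) :=
    (dvd_of_mul_dvd_mul_add hg hyd).trans (dvd_of_eq (by ring))
  have hc_dvd : c ∣ g * (a * b + b * c + c * a) + (a + b + c) :=
    (dvd_of_mul_dvd_mul_add hg hzd).trans (dvd_of_eq (by ring))
  obtain ⟨k, hk⟩ := (hca.symm.mul_left hbc).mul_dvd_of_dvd_of_dvd
    (hab.mul_dvd_of_dvd_of_dvd ha_dvd hb_dvd) hc_dvd
  exact ⟨g, a, b, c, k, rfl, rfl, rfl, hg, Nat.pos_of_mul_pos_left hx,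
    Nat.lt_of_mul_lt_mul_left hxy, Nat.lt_of_mul_lt_mul_left hyz, hab, by rw [mul_comm, hk]⟩

namespace IsReducedTriple

variable {g a b c k X t M d : ℕ}

theorem mid_pos (h : IsReducedTriple g a b c k) : 0 < b :=
  h.pos.trans h.lt_mid

theorem right_pos (h : IsReducedTriple g a b c k) : 0 < c :=
  h.mid_pos.trans h.mid_lt

theorem dvd_of_dvd_mul (h : IsReducedTriple g a b c k) (ha : d ∣ g * a) (hb : d ∣ g * b) :
    d ∣ g := by
  simpa [Nat.gcd_mul_left, h.coprime.gcd_eq_one] using Nat.dvd_gcd ha hb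

theorem lt_mul (h : IsReducedTriple g a b c k) : g < k * a := by
  refine Nat.lt_of_mul_lt_mul_right (a := b * c) ?_
  linarith [h.mul_eq, h.pos, Nat.zero_le (g * (a * b + c * a))]

theorem mul_lt_three_mul (h : IsReducedTriple g a b c k) : k * a < 3 * g := by
  have hab : c * (a + 1) ≤ c * b := Nat.mul_le_mul_left c h.lt_mid
  have hac : b * (a + 2) ≤ b * c :=
    Nat.mul_le_mul_left b (by have := h.lt_mid; have := h.mid_lt; lia)
  have hsum : a + b + c < g * (2 * b + c) :=
    (show a + b + c < 2 * b + c by have := h.lt_mid; lia).trans_le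
      (Nat.le_mul_of_pos_left _ h.gcd_pos)
  have hpair : g * (a * b + c * a + (2 * b + c)) ≤ g * (2 * (b * c)) :=
    Nat.mul_le_mul_left g (by linarith)
  refine Nat.lt_of_mul_lt_mul_right (a := b * c) ?_
  linarith [h.mul_eq]

theorem lt_three_mul (h : IsReducedTriple g a b c k) : a < 3 * g :=
  (Nat.le_mul_of_pos_left a (Nat.pos_of_mul_pos_right ((Nat.zero_le g).trans_lt h.lt_mul))).trans_lt
    h.mul_lt_three_mul

theorem four_mul_sq_le (h : IsReducedTriple g a b c k) (hM : k * a ≤ M + g) (ht : b * c ≤ t) :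
    4 * (g * a) ^ 2 ≤ M ^ 2 * t := by
  have hbc : 0 < b * c := Nat.mul_pos h.mid_pos h.right_pos
  have hM : g * a * (b + c) ≤ M * (b * c) := by
    have := Nat.mul_le_mul_right (b * c) hM
    linarith [h.mul_eq]
  refine Nat.le_of_mul_le_mul_right ?_ hbc
  calc 4 * (g * a) ^ 2 * (b * c) = (g * a) ^ 2 * (4 * b * c) := by ring
    _ ≤ (g * a) ^ 2 * (b + c) ^ 2 := Nat.mul_le_mul_left _ (four_mul_le_sq_add b c)
    _ = (g * a * (b + c)) ^ 2 := by ring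
    _ ≤ (M * (b * c)) ^ 2 := Nat.pow_le_pow_left hM 2
    _ = M ^ 2 * (b * c) * (b * c) := by ring
    _ ≤ M ^ 2 * t * (b * c) := by gcongr

theorem pow_three_le (h : IsReducedTriple g a b c k) (hX : g ^ 3 * (a * b * c) ≤ X) :
    (g * a) ^ 3 ≤ X := by
  refine le_trans ?_ hX
  have hab := h.lt_mid.le
  have hac := hab.trans h.mid_lt.le
  calc (g * a) ^ 3 = g ^ 3 * (a * a * a) := by ring
    _ ≤ g ^ 3 * (a * b * c) := by gcongr

theorem pow_three_mul_le (h : IsReducedTriple g a b c k) (hX : g ^ 3 * (a * b * c) ≤ X) :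
    (g * a) ^ 3 * ((a + 1) * (a + 2)) ≤ X * a ^ 2 := by
  have hab : a + 1 ≤ b := h.lt_mid
  have hac : a + 2 ≤ c := by have := h.mid_lt; lia
  calc (g * a) ^ 3 * ((a + 1) * (a + 2)) ≤ (g * a) ^ 3 * (b * c) := by gcongr
    _ = g ^ 3 * (a * b * c) * a ^ 2 := by ring
    _ ≤ X * a ^ 2 := by gcongr

theorem mul_add_eq (h : IsReducedTriple g a b c k) :
    (g * (a * b) + a + b) + (g * (a + b) + 1) * c = k * (a * b) * c := by
  linarith [h.mul_eq]

theorem dvd_mul_add (h : IsReducedTriple g a b c k) : c ∣ g * (a * b) + a + b :=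
  (Nat.dvd_add_left (dvd_mul_left c _)).1 (h.mul_add_eq ▸ dvd_mul_left c _)

theorem add_div_eq (h : IsReducedTriple g a b c k) :
    g * (a + b) + 1 + (g * (a * b) + a + b) / c = k * (a * b) := by
  refine Nat.eq_of_mul_eq_mul_right h.right_pos ?_
  rw [add_mul, Nat.div_mul_cancel h.dvd_mul_add, add_comm, h.mul_add_eq]

theorem eight_le (h : IsReducedTriple g a b c k) (hX : g ^ 3 * (a * b * c) ≤ 10 ^ 18)
    (hB : 891000 < g * a) : 8 ≤ a := by
  by_contra! ha
  have hcube : 891001 ^ 3 * ((a + 1) * (a + 2)) ≤ 10 ^ 18 * a ^ 2 :=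
    (Nat.mul_le_mul_right _ (Nat.pow_le_pow_left hB 3)).trans (h.pow_three_mul_le hX)
  interval_cases a <;> lia

end IsReducedTriple

theorem le_half_add_div {a b t : ℕ} (ha : 0 < a) (hb : b ^ 2 ≤ t) : b ≤ (a + t / a) / 2 := by
  rw [Nat.le_div_iff_mul_le two_pos, ← Nat.mul_add_div ha, Nat.le_div_iff_mul_le ha]
  have hsq : 2 * a * b ≤ a ^ 2 + b ^ 2 := two_mul_le_add_sq a b
  linarith

theorem coprime_factorial_of_lt {p n : ℕ} (hp : p.Prime) (hn : n < p) : p.Coprime n ! :=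
  (Nat.coprime_factorial_iff hp.ne_one).2 (hp.minFac_eq.symm ▸ hn)

/-- The conditions on a reduced triple that the search tests: the bound `X` on
`(g * a) * (g * b) * (g * c)`, and the coprimality to `L` of the three primes. -/
structure IsCandidate (X L g a b c k : ℕ) : Prop extends IsReducedTriple g a b c k where
  le : g ^ 3 * (a * b * c) ≤ X
  coprime_left : (g * a + 1).Coprime L
  coprime_mid : (g * b + 1).Coprime L
  coprime_right : (g * c + 1).Coprime L

/-- Application of `f` to `n`. The recursor makes the kernel evaluate `n` to a numeral first,
so that `n` is not recomputed at each of its occurrences in `f n`. -/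
noncomputable def force (n : ℕ) (f : ℕ → Bool) : Bool :=
  Nat.rec (f 0) (fun m _ ↦ f m.succ) n

theorem force_eq (n : ℕ) (f : ℕ → Bool) : force n f = f n := by
  cases n <;> rfl

/-- Boolean implication, which by its definition through the recursor does not evaluate its
conclusion when the premise fails. -/
noncomputable def imp (b x : Bool) : Bool := Bool.rec true x b

local infixr:25 " ⇒ " => imp

theorem imp_eq_true {b x : Bool} : (b ⇒ x) = true ↔ (b = true → x = true) := by
  cases b <;> simp [imp]

/-- The conjunction of `f x` for `lo ≤ x ≤ hi`. -/
noncomputable def allIcc (lo hi : ℕ) (f : ℕ → Bool) : Bool :=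
  force lo fun lo ↦
    Nat.rec true (fun d ih ↦ Bool.rec false ih (f (Nat.add lo d))) (Nat.sub (Nat.succ hi) lo)

theorem allIcc_eq_true {lo hi : ℕ} {f : ℕ → Bool} :
    allIcc lo hi f = true ↔ ∀ x, lo ≤ x → x ≤ hi → f x = true := by
  have hrec (n : ℕ) : Nat.rec true (fun d ih ↦ Bool.rec false ih (f (Nat.add lo d))) n = true ↔
      ∀ d < n, f (lo + d) = true := by
    induction n with
    | zero => simp
    | succ n ih =>
      simp only [Nat.forall_lt_succ_right, ← ih, Nat.add_eq]
      cases f (lo + n) <;> simp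
  rw [allIcc, force_eq, hrec, Nat.sub_eq]
  refine ⟨fun h x hlo hhi ↦ ?_, fun h d hd ↦ h _ (by lia) (by lia)⟩
  simpa only [Nat.add_sub_cancel' hlo] using h (x - lo) (by lia)

/-- Coprimality of `m` and `n` as a Boolean. -/
noncomputable def coprimeTest (m n : ℕ) : Bool := Nat.beq (Nat.gcd m n) 1

theorem coprimeTest_eq_true {m n : ℕ} : coprimeTest m n = true ↔ m.Coprime n := by
  rw [coprimeTest, Nat.beq_eq, Nat.coprime_iff_gcd_eq_one]

theorem natDiv_eq (m n : ℕ) : Nat.div m n = m / n := rfl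

theorem natMod_eq (m n : ℕ) : Nat.mod m n = m % n := rfl

-- The kernel computes these functions on numerals directly, whereas the instances behind `+`, `*`
-- and so on would be unfolded at every single evaluation.
local infixl:65 " +ₙ " => Nat.add
local infixl:65 " -ₙ " => Nat.sub
local infixl:70 " *ₙ " => Nat.mul
local infixl:70 " /ₙ " => Nat.div
local infixl:70 " %ₙ " => Nat.mod

/-- No `c` completes `g`, `a` and `b` to a candidate, tested by running through the multipliers `k`,
each of which determines `c`. -/
noncomputable def noThirdByMultiplier (X L g a b : ℕ) : Bool :=
  force (a *ₙ b) fun ab ↦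
  force (g *ₙ (a +ₙ b) +ₙ 1) fun e ↦
  force (g *ₙ ab +ₙ a +ₙ b) fun n ↦
  allIcc ((e +ₙ n /ₙ (X /ₙ (g *ₙ (g *ₙ (g *ₙ ab))))) /ₙ ab) ((e +ₙ n /ₙ b) /ₙ ab) fun k ↦
  force (k *ₙ ab -ₙ e) fun d ↦
    Nat.beq (n %ₙ d) 0 ⇒ coprimeTest (g *ₙ (n /ₙ d) +ₙ 1) L ⇒ false

/-- No `c` completes `g`, `a` and `b` to a candidate, tested by running through all `c`. -/
noncomputable def noThirdByScan (X L g a b : ℕ) : Bool :=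
  allIcc (b +ₙ 1) (X /ₙ (g *ₙ (g *ₙ (g *ₙ (a *ₙ b))))) fun c ↦
    Nat.beq ((g *ₙ (a *ₙ b +ₙ (a +ₙ b) *ₙ c) +ₙ a +ₙ b +ₙ c) %ₙ (a *ₙ b *ₙ c)) 0 ⇒
      coprimeTest (g *ₙ c +ₙ 1) L ⇒ false

/-- No `b` and `c` complete `g` and `a` to a candidate. Here `t` bounds `b * c` and `m` bounds
`k * a - g`; the threshold `100` between the two searches for `c` affects the running time only. -/
noncomputable def noSecond (X L g a : ℕ) : Bool :=
  coprimeTest (g *ₙ a +ₙ 1) L ⇒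
  force (X /ₙ (g *ₙ (g *ₙ (g *ₙ a)))) fun t ↦
  force ((3 *ₙ g -ₙ 1) /ₙ a *ₙ a -ₙ g) fun m ↦
    Nat.ble (4 *ₙ (g *ₙ a *ₙ (g *ₙ a))) (m *ₙ m *ₙ t) ⇒
    allIcc (a +ₙ 1) ((a +ₙ t /ₙ a) /ₙ 2) fun b ↦
      coprimeTest (g *ₙ b +ₙ 1) L ⇒ coprimeTest a b ⇒
        Bool.rec (noThirdByMultiplier X L g a b) (noThirdByScan X L g a b) (Nat.ble a 100)

/-- No even `g` with `B < g * a ≤ Y` belongs to a candidate with the given `a`. -/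
noncomputable def noEvenGcd (B Y X L a : ℕ) : Bool :=
  allIcc (B /ₙ (2 *ₙ a) +ₙ 1) (Y /ₙ (2 *ₙ a)) fun i ↦ force (2 *ₙ i) fun g ↦ noSecond X L g a

namespace IsCandidate

variable {X L g a b c k : ℕ}

theorem le_div (h : IsCandidate X L g a b c k) : c ≤ X / (g * (g * (g * (a * b)))) := by
  have := h.pos
  have := h.gcd_pos
  have := h.mid_pos
  rw [Nat.le_div_iff_mul_le (by positivity)]
  linarith [h.le]

theorem mul_le_div (h : IsCandidate X L g a b c k) : b * c ≤ X / (g * (g * (g * a))) := by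
  have := h.pos
  have := h.gcd_pos
  rw [Nat.le_div_iff_mul_le (by positivity)]
  linarith [h.le]

theorem noThirdByMultiplier_ne_true (h : IsCandidate X L g a b c k) :
    noThirdByMultiplier X L g a b ≠ true := by
  intro hs
  simp only [noThirdByMultiplier, force_eq, allIcc_eq_true, imp_eq_true, coprimeTest_eq_true,
    Nat.beq_eq, Nat.add_eq, Nat.mul_eq, Nat.sub_eq, natDiv_eq, natMod_eq] at hs
  have hab : 0 < a * b := Nat.mul_pos h.pos h.mid_pos
  have hc : 0 < c := h.right_pos
  have hn : g * (a * b) + a + b ≠ 0 := (Nat.add_pos_right _ h.mid_pos).ne'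
  have hk : (g * (a + b) + 1 + (g * (a * b) + a + b) / c) / (a * b) = k := by
    rw [h.add_div_eq, Nat.mul_div_cancel k hab]
  have hd : k * (a * b) - (g * (a + b) + 1) = (g * (a * b) + a + b) / c := by
    rw [← h.add_div_eq, Nat.add_sub_cancel_left]
  refine Bool.false_ne_true (hs k ?_ ?_ ?_ ?_)
  · rw [← hk]
    gcongr
    exact h.le_div
  · have := h.mid_pos
    rw [← hk]
    gcongr
    exact h.mid_lt.le
  · rw [hd]
    exact Nat.mod_eq_zero_of_dvd (Nat.div_dvd_of_dvd h.dvd_mul_add)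
  · rw [hd, Nat.div_div_self h.dvd_mul_add hn]
    exact h.coprime_right

theorem noThirdByScan_ne_true (h : IsCandidate X L g a b c k) :
    noThirdByScan X L g a b ≠ true := by
  intro hs
  simp only [noThirdByScan, allIcc_eq_true, imp_eq_true, coprimeTest_eq_true,
    Nat.beq_eq, Nat.add_eq, Nat.mul_eq, natDiv_eq, natMod_eq] at hs
  refine Bool.false_ne_true (hs c h.mid_lt h.le_div ?_ h.coprime_right)
  refine Nat.mod_eq_zero_of_dvd ⟨k, ?_⟩
  linarith [h.mul_eq]

theorem noSecond_ne_true (h : IsCandidate X L g a b c k) : noSecond X L g a ≠ true := by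
  intro hs
  simp only [noSecond, force_eq, allIcc_eq_true, imp_eq_true, coprimeTest_eq_true,
    Nat.ble_eq, Nat.add_eq, Nat.mul_eq, Nat.sub_eq, natDiv_eq] at hs
  have hk : k * a ≤ (3 * g - 1) / a * a - g + g := by
    have hk_le : k ≤ (3 * g - 1) / a :=
      (Nat.le_div_iff_mul_le h.pos).2 (Nat.le_sub_one_of_lt h.mul_lt_three_mul)
    have := Nat.mul_le_mul_right a hk_le
    lia
  have hguard := h.four_mul_sq_le hk h.mul_le_div
  have hb : b ≤ (a + X / (g * (g * (g * a))) / a) / 2 :=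
    le_half_add_div h.pos <| (sq b).trans_le <|
      (Nat.mul_le_mul_left b h.mid_lt.le).trans h.mul_le_div
  simp only [sq] at hguard
  specialize hs h.coprime_left hguard b h.lt_mid hb h.coprime_mid h.coprime
  cases hble : Nat.ble a 100 with
  | false => exact h.noThirdByMultiplier_ne_true (by simpa only [hble] using hs)
  | true => exact h.noThirdByScan_ne_true (by simpa only [hble] using hs)

theorem noEvenGcd_ne_true {B Y : ℕ} (h : IsCandidate X L g a b c k) (hg : 2 ∣ g) (hB : B < g * a)
    (hY : g * a ≤ Y) : noEvenGcd B Y X L a ≠ true := by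
  obtain ⟨i, rfl⟩ := hg
  intro hs
  simp only [noEvenGcd, force_eq, allIcc_eq_true, Nat.add_eq, Nat.mul_eq, natDiv_eq] at hs
  have ha : 0 < 2 * a := by have := h.pos; lia
  refine h.noSecond_ne_true (hs i ?_ ?_)
  · rw [Nat.succ_le_iff, Nat.div_lt_iff_lt_mul ha]
    linarith
  · rw [Nat.le_div_iff_mul_le ha]
    linarith

end IsCandidate

set_option maxRecDepth 100000 in
theorem search_eq_true :
    force (10 ^ 18) (fun X ↦ force (1200 !) fun L ↦
      allIcc 8 1732 (noEvenGcd 891000 (10 ^ 6) X L)) = true := by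
  decide +kernel

theorem not_isCandidate {g a b c k : ℕ} (hg : 2 ∣ g) (hB : 891000 < g * a) :
    ¬ IsCandidate (10 ^ 18) (1200 !) g a b c k := by
  intro h
  have hY : g * a ≤ 10 ^ 6 :=
    (Nat.pow_le_pow_iff_left three_ne_zero).1 (h.pow_three_le (h.le.trans (by norm_num)))
  have ha : a ≤ 1732 := by
    have := h.lt_three_mul
    by_contra! ha
    -- Multiply `a < 3 * g` by `a`: then `a ^ 2 < 3 * 10 ^ 6`.
    nlinarith
  have hs := search_eq_true
  rw [force_eq, force_eq, allIcc_eq_true] at hs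
  exact h.noEvenGcd_ne_true hg hB hY (hs a (h.eight_le h.le hB) ha)

namespace IsCarmichael

theorem exists_isReducedTriple {p q r : ℕ} (h : IsCarmichael (p * q * r)) (hp : p.Prime)
    (hq : q.Prime) (hr : r.Prime) (hpq : p < q) (hqr : q < r) :
    ∃ g a b c k, p = g * a + 1 ∧ q = g * b + 1 ∧ r = g * c + 1 ∧ IsReducedTriple g a b c k := by
  have hp_dvd : p - 1 ∣ q * r - 1 :=
    (show IsCarmichael (p * (q * r)) by rwa [← mul_assoc]).sub_one_dvd_cofactor_sub_one hp
  have hq_dvd : q - 1 ∣ r * p - 1 :=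
    (show IsCarmichael (q * (r * p)) by convert h using 1; ring).sub_one_dvd_cofactor_sub_one hq
  have hr_dvd : r - 1 ∣ p * q - 1 :=
    (show IsCarmichael (r * (p * q)) by rwa [mul_comm]).sub_one_dvd_cofactor_sub_one hr
  have hx : 0 < p - 1 := Nat.sub_pos_of_lt hp.one_lt
  obtain ⟨x, rfl⟩ := Nat.exists_eq_add_of_le' hp.one_le
  obtain ⟨y, rfl⟩ := Nat.exists_eq_add_of_le' hq.one_le
  obtain ⟨z, rfl⟩ := Nat.exists_eq_add_of_le' hr.one_le
  have hmul (m n : ℕ) : (m + 1) * (n + 1) - 1 = m * n + m + n :=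
    Nat.sub_eq_of_eq_add (by ring)
  simp only [Nat.add_sub_cancel, hmul] at hx hp_dvd hq_dvd hr_dvd
  obtain ⟨g, a, b, c, k, rfl, rfl, rfl, ht⟩ := exists_isReducedTriple_of_dvd hx
    (Nat.lt_of_add_lt_add_right hpq) (Nat.lt_of_add_lt_add_right hqr) hp_dvd hq_dvd hr_dvd
  exact ⟨g, a, b, c, k, rfl, rfl, rfl, ht⟩

theorem exists_prime_le {N : ℕ} (h : IsCarmichael N) (hN : N < 10 ^ 18) :
    ∃ p : ℕ, p.Prime ∧ p ∣ N ∧ p ≤ 891001 := by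
  by_contra! hlarge
  have hcard : N.primeFactors.card = 3 :=
    h.card_primeFactors_eq_three (B := 891001) (hN.trans (by norm_num))
      fun p hp hpN ↦ (hlarge p hp hpN).le
  obtain ⟨p, q, r, hp, hq, hr, hpq, hqr, rfl⟩ :=
    exists_lt_lt_of_card_primeFactors_eq_three h.squarefree hcard
  have hp_gt : 891001 < p := hlarge p hp ⟨q * r, mul_assoc p q r⟩
  have hp_dvd : 2 ∣ p - 1 := (hp.even_sub_one (by lia)).two_dvd
  have hq_dvd : 2 ∣ q - 1 := (hq.even_sub_one (by lia)).two_dvd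
  have hcop {s : ℕ} (hs : s.Prime) (hps : p ≤ s) : s.Coprime (1200 !) :=
    coprime_factorial_of_lt hs (by lia)
  obtain ⟨g, a, b, c, k, rfl, rfl, rfl, ht⟩ := h.exists_isReducedTriple hp hq hr hpq hqr
  refine not_isCandidate (ht.dvd_of_dvd_mul hp_dvd hq_dvd) (by lia)
    ⟨ht, ?_, hcop hp le_rfl, hcop hq hpq.le, hcop hr (hpq.trans hqr).le⟩
  calc g ^ 3 * (a * b * c) = g * a * (g * b) * (g * c) := by ring
    _ ≤ (g * a + 1) * (g * b + 1) * (g * c + 1) := by gcongr <;> exact Nat.le_succ _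
    _ ≤ 10 ^ 18 := hN.le

end IsCarmichael

theorem carmichael_largest_smallest_prime_factor :
    (804230935331967001 : ℕ) = 891001 * 895051 * 1008451 ∧
      IsCarmichael 804230935331967001 ∧ (804230935331967001 : ℕ) < 10 ^ 18 ∧
      Nat.minFac 804230935331967001 = 891001 ∧
      ∀ N : ℕ, IsCarmichael N → N < 10 ^ 18 →
        ∃ p : ℕ, p.Prime ∧ p ∣ N ∧ p ≤ 891001 := by
  have hprod : (804230935331967001 : ℕ) = 891001 * 895051 * 1008451 := by norm_num
  have hp : Nat.Prime 891001 := by norm_num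
  have hq : Nat.Prime 895051 := by norm_num
  have hr : Nat.Prime 1008451 := by norm_num
  refine ⟨hprod, ?_, by norm_num, ?_, fun _ ↦ IsCarmichael.exists_prime_le⟩
  · rw [hprod]
    exact isCarmichael_mul_mul hp hq hr (by norm_num) (by norm_num) (by norm_num) (by norm_num)
      (by norm_num)
  · rw [hprod]
    exact minFac_mul_mul hp hq hr (by norm_num) (by norm_num)
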